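/- Let S be a CFCST system over Σ. (i) Every labelled sequent derivable in Km(S)L is Km(S)-valid. (ii) For every formula φ that is Km(S)-valid, the labelled sequent ∅ ⊢ w:φ is derivable in Km(S)L. -/

import Mathlib

/-!
Labelled sequent calculi for context-free grammar logics with converse.
-/

namespace GrammarLogic

/-- Modal formulae in negation normal form over the alphabet `α`:
literals `p`, `p̄`, and the connectives `∨`, `∧`, `⟨x⟩`, `[x]` (`x ∈ α`). -/
inductive Fml (α : Type) : Type
  | pos : ℕ → Fml α
  | neg : ℕ → Fml α
  | or  : Fml α → Fml α → Fml α
  | and : Fml α → Fml α → Fml α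
  | dia : α → Fml α → Fml α
  | box : α → Fml α → Fml α

/-- Multisets of relational atoms `R_x w u` (labels are natural numbers). -/
abbrev RAtms (α : Type) : Type := Multiset (α × ℕ × ℕ)

/-- Multisets of labelled formulae `w : φ`. -/
abbrev LFmls (α : Type) : Type := Multiset (ℕ × Fml α)

/-- The converse `s̄` of a string: reverse and apply the converse characterwise. -/
def strConv {α : Type} (bar : α → α) (s : List α) : List α := s.reverse.map bar

/-- A context-free converse-closed string rewriting (CFCST) system over `α`
with converse operation `bar`: a finite set of production rules closed under
converses. -/
structure CFCST (α : Type) (bar : α → α) : Type where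
  rules : Set (α × List α)
  finite : rules.Finite
  closed : ∀ x s, (x, s) ∈ rules ↔ (bar x, strConv bar s) ∈ rules

/-- One-step rewriting: replace an occurrence of the head of a production rule
by its body. -/
def OneStep {α : Type} (P : Set (α × List α)) (s t : List α) : Prop :=
  ∃ u v x r, (x, r) ∈ P ∧ s = u ++ x :: v ∧ t = u ++ r ++ v

/-- `Lang P x s` iff `x →*_S s`, i.e. `s ∈ L_S(x)`. -/
def Lang {α : Type} (P : Set (α × List α)) (x : α) (s : List α) : Prop :=
  Relation.ReflTransGen (OneStep P) [x] s

/-- Edges of the propagation graph determined by the relational atoms `R`: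
each `R_x w u` in `R` gives an edge `(w,u)` labelled `x` and an edge `(u,w)`
labelled `x̄`. -/
def Edge {α : Type} (bar : α → α) (R : RAtms α) (w u : ℕ) (c : α) : Prop :=
  (c, w, u) ∈ R ∨ (bar c, u, w) ∈ R

/-- `PPath bar R w u s`: there is a (possibly empty) propagation path from `w`
to `u` in the propagation graph determined by `R` whose string is `s`. -/
inductive PPath {α : Type} (bar : α → α) (R : RAtms α) : ℕ → ℕ → List α → Prop
  | nil (w : ℕ) : PPath bar R w w []
  | cons {w u v : ℕ} {c : α} {s : List α} :
      Edge bar R w u c → PPath bar R u v s → PPath bar R w v (c :: s)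

/-- Side condition of the propagation rule `(Pr_⟨x⟩)`: there is a propagation
path from `w` to `u` whose string belongs to `L_S(x)`. -/
def PropCond {α : Type} (bar : α → α) (P : Set (α × List α)) (R : RAtms α)
    (x : α) (w u : ℕ) : Prop :=
  ∃ s, PPath bar R w u s ∧ Lang P x s

/-- The label `v` occurs in the labelled sequent `R ⊢ Γ`. -/
def occursIn {α : Type} (v : ℕ) (R : RAtms α) (Γ : LFmls α) : Prop :=
  (∃ x w u, (x, w, u) ∈ R ∧ (v = w ∨ v = u)) ∨ ∃ φ, (v, φ) ∈ Γ

/-- `ChainR s w u C`: the multiset `C` is a chain of relational atoms `R_s w u`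
(for `s = ε` it is empty and `u = w`). -/
inductive ChainR {α : Type} : List α → ℕ → ℕ → RAtms α → Prop
  | nil (w : ℕ) : ChainR [] w w 0
  | cons {y : α} {s : List α} {w v u : ℕ} {C : RAtms α} :
      ChainR s v u C → ChainR (y :: s) w u ((y, w, v) ::ₘ C)

/-- Gated labelled sequent calculi for grammar logics.  The rules `(id)`, `(∨r)`,
`(∧r)` and `([x])` are always present; the rules `(⟨x⟩)`, the propagation rules
`(Pr_⟨x⟩)`, the structural rules `(p^x_s)` (for `x → s ∈ P`) and the converse
rules `(C1^x)` are present exactly when the respective gates `gDia`, `gPr`,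
`gProd`, `gCnv` hold.  In particular, `Der bar P True False True True` is the
labelled calculus `G3Km(S)` and `Der bar P False True False False` is the
refined labelled calculus `Km(S)L`. -/
inductive Der {α : Type} (bar : α → α) (P : Set (α × List α))
    (gDia gPr gProd gCnv : Prop) : RAtms α → LFmls α → Prop
  | id (R : RAtms α) (Γ : LFmls α) (w p : ℕ) :
      Der bar P gDia gPr gProd gCnv R ((w, Fml.pos p) ::ₘ (w, Fml.neg p) ::ₘ Γ)
  | orr {R : RAtms α} {Γ : LFmls α} {w : ℕ} {φ ψ : Fml α} :
      Der bar P gDia gPr gProd gCnv R ((w, φ) ::ₘ (w, ψ) ::ₘ Γ) →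
      Der bar P gDia gPr gProd gCnv R ((w, Fml.or φ ψ) ::ₘ Γ)
  | andr {R : RAtms α} {Γ : LFmls α} {w : ℕ} {φ ψ : Fml α} :
      Der bar P gDia gPr gProd gCnv R ((w, φ) ::ₘ Γ) →
      Der bar P gDia gPr gProd gCnv R ((w, ψ) ::ₘ Γ) →
      Der bar P gDia gPr gProd gCnv R ((w, Fml.and φ ψ) ::ₘ Γ)
  | boxr {R : RAtms α} {Γ : LFmls α} {w u : ℕ} {x : α} {φ : Fml α} :
      ¬ occursIn u R ((w, Fml.box x φ) ::ₘ Γ) →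
      Der bar P gDia gPr gProd gCnv ((x, w, u) ::ₘ R) ((u, φ) ::ₘ Γ) →
      Der bar P gDia gPr gProd gCnv R ((w, Fml.box x φ) ::ₘ Γ)
  | diar {R : RAtms α} {Γ : LFmls α} {w u : ℕ} {x : α} {φ : Fml α} :
      gDia →
      Der bar P gDia gPr gProd gCnv ((x, w, u) ::ₘ R)
        ((w, Fml.dia x φ) ::ₘ (u, φ) ::ₘ Γ) →
      Der bar P gDia gPr gProd gCnv ((x, w, u) ::ₘ R) ((w, Fml.dia x φ) ::ₘ Γ)
  | pr {R : RAtms α} {Γ : LFmls α} {w u : ℕ} {x : α} {φ : Fml α} :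
      gPr → PropCond bar P R x w u →
      Der bar P gDia gPr gProd gCnv R ((w, Fml.dia x φ) ::ₘ (u, φ) ::ₘ Γ) →
      Der bar P gDia gPr gProd gCnv R ((w, Fml.dia x φ) ::ₘ Γ)
  | prodr {R C : RAtms α} {Γ : LFmls α} {x : α} {s : List α} {w u : ℕ} :
      gProd → (x, s) ∈ P → ChainR s w u C →
      Der bar P gDia gPr gProd gCnv (C + ((x, w, u) ::ₘ R)) Γ →
      Der bar P gDia gPr gProd gCnv (C + R) Γ
  | cnvr {R : RAtms α} {Γ : LFmls α} {x : α} {w u : ℕ} :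
      gCnv →
      Der bar P gDia gPr gProd gCnv ((x, w, u) ::ₘ (bar x, u, w) ::ₘ R) Γ →
      Der bar P gDia gPr gProd gCnv ((x, w, u) ::ₘ R) Γ

/-- The labelled calculus `G3Km(S)`. -/
abbrev G3Km {α : Type} (bar : α → α) (S : CFCST α bar) : RAtms α → LFmls α → Prop :=
  Der bar S.rules True False True True

/-- The refined labelled calculus `Km(S)L`. -/
abbrev KmL {α : Type} (bar : α → α) (S : CFCST α bar) : RAtms α → LFmls α → Prop :=
  Der bar S.rules False True False False

/-- Composite relation `R_{y₁⋯yₙ} = R_{y₁};⋯;R_{yₙ}` (the identity for `ε`). -/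
def RelChain {α W : Type} (rel : α → W → W → Prop) : List α → W → W → Prop
  | [], w, u => w = u
  | x :: s, w, u => ∃ v, rel x w v ∧ RelChain rel s v u

/-- `Km(S)`-models: `R_x̄ = R_x⁻¹` for all `x`, and `R_s ⊆ R_x` for every
production rule `x → s ∈ P`. -/
structure KmModel (α : Type) (bar : α → α) (P : Set (α × List α)) : Type 1 where
  W : Type
  nonempty : Nonempty W
  rel : α → W → W → Prop
  conv : ∀ (x : α) (w u : W), rel (bar x) w u ↔ rel x u w
  prodCond : ∀ (x : α) (s : List α), (x, s) ∈ P →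
    ∀ (w u : W), RelChain rel s w u → rel x w u
  val : ℕ → Set W

/-- Satisfaction in a `Km(S)`-model. -/
def Sat {α : Type} {bar : α → α} {P : Set (α × List α)} (M : KmModel α bar P) :
    M.W → Fml α → Prop
  | w, Fml.pos p => w ∈ M.val p
  | w, Fml.neg p => w ∉ M.val p
  | w, Fml.or φ ψ => Sat M w φ ∨ Sat M w ψ
  | w, Fml.and φ ψ => Sat M w φ ∧ Sat M w ψ
  | w, Fml.dia x φ => ∃ u, M.rel x w u ∧ Sat M u φ
  | w, Fml.box x φ => ∀ u, M.rel x w u → Sat M u φ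

/-- `Km(S)`-validity of a labelled sequent. -/
def SeqValid {α : Type} (bar : α → α) (P : Set (α × List α))
    (R : RAtms α) (Γ : LFmls α) : Prop :=
  ∀ (M : KmModel α bar P) (f : ℕ → M.W),
    (∀ x w u, (x, w, u) ∈ R → M.rel x (f w) (f u)) →
    ∃ w φ, (w, φ) ∈ Γ ∧ Sat M (f w) φ

/-- `Km(S)`-validity of a formula. -/
def FmlValid {α : Type} (bar : α → α) (P : Set (α × List α)) (φ : Fml α) : Prop :=
  ∀ (M : KmModel α bar P) (w : M.W), Sat M w φ

section Aux

variable {α : Type} {bar : α → α} {P : Set (α × List α)}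

theorem relChain_append {W : Type} (rel : α → W → W → Prop) (s t : List α) (w u : W) :
    RelChain rel (s ++ t) w u ↔ ∃ v, RelChain rel s w v ∧ RelChain rel t v u := by
  induction s generalizing w with
  | nil => simp [RelChain]
  | cons x s ih =>
    simp only [List.cons_append, RelChain, ih]
    constructor
    · rintro ⟨v, h, v', h1, h2⟩
      exact ⟨v', ⟨v, h, h1⟩, h2⟩
    · rintro ⟨v', ⟨v, h, h1⟩, h2⟩
      exact ⟨v, h, v', h1, h2⟩

theorem relChain_of_steps (M : KmModel α bar P) {s t : List α}
    (h : Relation.ReflTransGen (OneStep P) s t) (w u : M.W) :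
    RelChain M.rel t w u → RelChain M.rel s w u := by
  induction h with
  | refl => exact id
  | tail _ h2 ih =>
    intro h
    apply ih
    obtain ⟨a, b, x, r, hP, rfl, rfl⟩ := h2
    rw [List.append_assoc, relChain_append] at h
    obtain ⟨v, h1, h2⟩ := h
    rw [relChain_append] at h2
    obtain ⟨v', h2, h3⟩ := h2
    rw [relChain_append]
    exact ⟨v, h1, v', M.prodCond x r hP _ _ h2, h3⟩

theorem relChain_of_path (M : KmModel α bar P) {R : RAtms α} (f : ℕ → M.W)
    (hf : ∀ x w u, (x, w, u) ∈ R → M.rel x (f w) (f u)) {w u : ℕ} {s : List α}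
    (h : PPath bar R w u s) : RelChain M.rel s (f w) (f u) := by
  induction h with
  | nil w => exact rfl
  | cons e _ ih =>
    refine ⟨_, ?_, ih⟩
    rcases e with e | e
    · exact hf _ _ _ e
    · exact (M.conv _ _ _).1 (hf _ _ _ e)

theorem rel_of_propCond (M : KmModel α bar P) {R : RAtms α} (f : ℕ → M.W)
    (hf : ∀ x w u, (x, w, u) ∈ R → M.rel x (f w) (f u)) {x : α} {w u : ℕ}
    (h : PropCond bar P R x w u) : M.rel x (f w) (f u) := by
  obtain ⟨s, h1, h2⟩ := h
  obtain ⟨v, h3, h4⟩ := relChain_of_steps M h2 _ _ (relChain_of_path M f hf h1)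
  have h4 : v = f u := h4
  exact h4 ▸ h3

theorem soundness {R : RAtms α} {Γ : LFmls α} (h : Der bar P False True False False R Γ) :
    SeqValid bar P R Γ := by
  induction h with
  | id R Γ w p =>
    intro M f hf
    by_cases h : f w ∈ M.val p
    · exact ⟨w, .pos p, by simp, h⟩
    · exact ⟨w, .neg p, by simp, h⟩
  | @orr R Γ w φ ψ _ ih =>
    intro M f hf
    obtain ⟨v, χ, hm, hs⟩ := ih M f hf
    simp only [Multiset.mem_cons, Prod.mk.injEq] at hm
    rcases hm with ⟨rfl, rfl⟩ | ⟨rfl, rfl⟩ | hm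
    · exact ⟨_, _, Multiset.mem_cons_self _ _, Or.inl hs⟩
    · exact ⟨_, _, Multiset.mem_cons_self _ _, Or.inr hs⟩
    · exact ⟨v, χ, Multiset.mem_cons_of_mem hm, hs⟩
  | @andr R Γ w φ ψ _ _ ih1 ih2 =>
    intro M f hf
    obtain ⟨v, χ, hm, hs⟩ := ih1 M f hf
    obtain ⟨v', χ', hm', hs'⟩ := ih2 M f hf
    simp only [Multiset.mem_cons, Prod.mk.injEq] at hm hm'
    rcases hm with ⟨rfl, rfl⟩ | hm
    · rcases hm' with ⟨rfl, rfl⟩ | hm'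
      · exact ⟨_, _, Multiset.mem_cons_self _ _, ⟨hs, hs'⟩⟩
      · exact ⟨_, _, Multiset.mem_cons_of_mem hm', hs'⟩
    · exact ⟨_, _, Multiset.mem_cons_of_mem hm, hs⟩
  | @boxr R Γ w u x φ hocc _ ih =>
    intro M f hf
    by_contra hcon
    apply hcon
    refine ⟨w, .box x φ, Multiset.mem_cons_self _ _, ?_⟩
    intro v hv
    have hwu : w ≠ u := by
      rintro rfl
      exact hocc (Or.inr ⟨_, Multiset.mem_cons_self _ _⟩)
    obtain ⟨w', χ, hm, hs⟩ := ih M (Function.update f u v) (by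
      intro y a b hab
      simp only [Multiset.mem_cons, Prod.mk.injEq] at hab
      rcases hab with ⟨rfl, rfl, rfl⟩ | hab
      · simpa [Function.update_of_ne hwu] using hv
      · have ha : a ≠ u := by
          rintro rfl
          exact hocc (Or.inl ⟨_, _, _, hab, Or.inl rfl⟩)
        have hb : b ≠ u := by
          rintro rfl
          exact hocc (Or.inl ⟨_, _, _, hab, Or.inr rfl⟩)
        rw [Function.update_of_ne ha, Function.update_of_ne hb]
        exact hf _ _ _ hab)
    simp only [Multiset.mem_cons, Prod.mk.injEq] at hm
    rcases hm with ⟨rfl, rfl⟩ | hm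
    · simpa using hs
    · have hw' : w' ≠ u := by
        rintro rfl
        exact hocc (Or.inr ⟨_, Multiset.mem_cons_of_mem hm⟩)
      rw [Function.update_of_ne hw'] at hs
      exact (hcon ⟨_, _, Multiset.mem_cons_of_mem hm, hs⟩).elim
  | diar h => exact h.elim
  | @pr R Γ w u x φ _ hp _ ih =>
    intro M f hf
    obtain ⟨v, χ, hm, hs⟩ := ih M f hf
    simp only [Multiset.mem_cons, Prod.mk.injEq] at hm
    rcases hm with ⟨rfl, rfl⟩ | ⟨rfl, rfl⟩ | hm
    · exact ⟨_, _, Multiset.mem_cons_self _ _, hs⟩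
    · exact ⟨_, _, Multiset.mem_cons_self _ _, ⟨_, rel_of_propCond M f hf hp, hs⟩⟩
    · exact ⟨v, χ, Multiset.mem_cons_of_mem hm, hs⟩
  | prodr h => exact h.elim
  | cnvr h => exact h.elim

/-! ### Paths and languages -/

theorem PPath.append {R : RAtms α} {w v u : ℕ} {s t : List α}
    (h1 : PPath bar R w v s) (h2 : PPath bar R v u t) : PPath bar R w u (s ++ t) := by
  induction h1 with
  | nil => exact h2
  | cons e _ ih => exact PPath.cons e (ih h2)

theorem PPath.mono {R R' : RAtms α} (hR : R ⊆ R') {w u : ℕ} {s : List α}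
    (h : PPath bar R w u s) : PPath bar R' w u s := by
  induction h with
  | nil => exact PPath.nil _
  | cons e _ ih => exact PPath.cons (e.imp (fun h => hR h) (fun h => hR h)) ih

theorem PropCond.mono {R R' : RAtms α} (hR : R ⊆ R') {x : α} {w u : ℕ}
    (h : PropCond bar P R x w u) : PropCond bar P R' x w u := by
  obtain ⟨s, h1, h2⟩ := h
  exact ⟨s, h1.mono hR, h2⟩

theorem PPath.conv (hbar : Function.Involutive bar) {R : RAtms α} {w u : ℕ} {s : List α}
    (h : PPath bar R w u s) : PPath bar R u w (strConv bar s) := by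
  induction h with
  | nil => exact PPath.nil _
  | @cons w u v c s e _ ih =>
    have : strConv bar (c :: s) = strConv bar s ++ [bar c] := by simp [strConv]
    rw [this]
    refine ih.append (PPath.cons ?_ (PPath.nil _))
    rcases e with e | e
    · right; rw [hbar c]; exact e
    · left; exact e

theorem steps_conv (hc : ∀ x s, (x, s) ∈ P → (bar x, strConv bar s) ∈ P) {s t : List α}
    (h : Relation.ReflTransGen (OneStep P) s t) :
    Relation.ReflTransGen (OneStep P) (strConv bar s) (strConv bar t) := by
  induction h with
  | refl => exact .refl
  | tail _ h2 ih =>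
    refine ih.tail ?_
    obtain ⟨a, b, x, r, hP, rfl, rfl⟩ := h2
    exact ⟨strConv bar b, strConv bar a, bar x, strConv bar r, hc _ _ hP,
      by simp [strConv], by simp [strConv]⟩

theorem PropCond.conv (hbar : Function.Involutive bar)
    (hc : ∀ x s, (x, s) ∈ P → (bar x, strConv bar s) ∈ P) {R : RAtms α} {x : α} {w u : ℕ}
    (h : PropCond bar P R x w u) : PropCond bar P R (bar x) u w := by
  obtain ⟨s, h1, h2⟩ := h
  exact ⟨_, h1.conv hbar, steps_conv (s := [x]) hc h2⟩

theorem steps_append {s s' t t' : List α}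
    (h1 : Relation.ReflTransGen (OneStep P) s s')
    (h2 : Relation.ReflTransGen (OneStep P) t t') :
    Relation.ReflTransGen (OneStep P) (s ++ t) (s' ++ t') := by
  have e1 : Relation.ReflTransGen (OneStep P) (s ++ t) (s' ++ t) := by
    induction h1 with
    | refl => exact .refl
    | tail _ h ih =>
      refine ih.tail ?_
      obtain ⟨a, b, x, r, hP, rfl, rfl⟩ := h
      exact ⟨a, b ++ t, x, r, hP, by simp, by simp⟩
  refine e1.trans ?_
  induction h2 with
  | refl => exact .refl
  | tail _ h ih =>
    refine ih.tail ?_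
    obtain ⟨a, b, x, r, hP, rfl, rfl⟩ := h
    exact ⟨s' ++ a, b, x, r, hP, by simp, by simp⟩

/-! ### Labels -/

theorem exists_bound (R : RAtms α) : ∃ N, ∀ x w u, (x, w, u) ∈ R → w < N ∧ u < N := by
  induction R using Multiset.induction_on with
  | empty => exact ⟨0, by simp⟩
  | cons a R ih =>
    obtain ⟨N, hN⟩ := ih
    obtain ⟨y, p, q⟩ := a
    refine ⟨N + p + q + 1, ?_⟩
    intro x w u h
    simp only [Multiset.mem_cons, Prod.mk.injEq] at h
    rcases h with ⟨rfl, rfl, rfl⟩ | h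
    · omega
    · have := hN _ _ _ h
      omega

theorem exists_fresh (R : RAtms α) (Γ : LFmls α) : ∃ v, ¬ occursIn v R Γ := by
  obtain ⟨N, hN⟩ := exists_bound R
  have hΓ : ∃ K, ∀ w φ, (w, φ) ∈ Γ → w < K := by
    induction Γ using Multiset.induction_on with
    | empty => exact ⟨0, by simp⟩
    | cons a Γ ih =>
      obtain ⟨K, hK⟩ := ih
      obtain ⟨p, ψ⟩ := a
      refine ⟨K + p + 1, ?_⟩
      intro w φ h
      simp only [Multiset.mem_cons, Prod.mk.injEq] at h
      rcases h with ⟨rfl, rfl⟩ | h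
      · omega
      · have := hK _ _ h
        omega
  obtain ⟨K, hK⟩ := hΓ
  refine ⟨N + K, ?_⟩
  rintro (⟨x, w, u, h, h'⟩ | ⟨φ, h⟩)
  · have := hN _ _ _ h
    omega
  · have := hK _ _ h
    omega

theorem PPath.bound {R : RAtms α} {N : ℕ} (hN : ∀ x w u, (x, w, u) ∈ R → w < N ∧ u < N)
    {w u : ℕ} {s : List α} (h : PPath bar R w u s) (hw : w < N) : u < N := by
  induction h with
  | nil => exact hw
  | cons e _ ih =>
    apply ih
    rcases e with e | e
    · exact (hN _ _ _ e).2
    · exact (hN _ _ _ e).1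

theorem exists_targets (R : RAtms α) (x : α) (w : ℕ) :
    ∃ l : List ℕ, ∀ u, u ∈ l ↔ PropCond bar P R x w u := by
  classical
  obtain ⟨N, hN⟩ := exists_bound R
  refine ⟨(List.range (N + w + 1)).filter (fun u => PropCond bar P R x w u), fun u => ?_⟩
  simp only [List.mem_filter, List.mem_range, decide_eq_true_eq, and_iff_right_iff_imp]
  rintro ⟨s, h, _⟩
  refine h.bound (N := N + w + 1) ?_ (by omega)
  intro y a b hab
  have := hN _ _ _ hab
  omega

/-! ### Saturation -/

/-- `a` has been processed: `R₀` is the set of atoms at the start of the round. -/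
def Good (bar : α → α) (P : Set (α × List α)) (R₀ R : RAtms α) (Γ : LFmls α) :
    ℕ × Fml α → Prop
  | (w, .pos p) => (w, Fml.pos p) ∈ Γ
  | (w, .neg p) => (w, Fml.neg p) ∈ Γ
  | (w, .or φ ψ) => (w, φ) ∈ Γ ∧ (w, ψ) ∈ Γ
  | (w, .and φ ψ) => (w, φ) ∈ Γ ∨ (w, ψ) ∈ Γ
  | (w, .dia x φ) => (w, Fml.dia x φ) ∈ Γ ∧ ∀ u, PropCond bar P R₀ x w u → (u, φ) ∈ Γ
  | (w, .box x φ) => ∃ u, (x, w, u) ∈ R ∧ (u, φ) ∈ Γ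

theorem Good.mono {R₀ R R' : RAtms α} {Γ Γ' : LFmls α} (hR : R ⊆ R') (hΓ : Γ ⊆ Γ')
    {a : ℕ × Fml α} (h : Good bar P R₀ R Γ a) : Good bar P R₀ R' Γ' a := by
  obtain ⟨w, φ⟩ := a
  cases φ with
  | pos p => exact hΓ h
  | neg p => exact hΓ h
  | or φ ψ => exact ⟨hΓ h.1, hΓ h.2⟩
  | and φ ψ => exact h.imp (fun h => hΓ h) (fun h => hΓ h)
  | dia x φ => exact ⟨hΓ h.1, fun u hu => hΓ (h.2 u hu)⟩
  | box x φ =>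
    obtain ⟨u, h1, h2⟩ := h
    exact ⟨u, hR h1, hΓ h2⟩

theorem dia_step {R : RAtms α} {x : α} {w : ℕ} {φ : Fml α} (l : List ℕ)
    (hl : ∀ u ∈ l, PropCond bar P R x w u) (Γ : LFmls α)
    (h : ¬ Der bar P False True False False R ((w, Fml.dia x φ) ::ₘ Γ)) :
    ∃ Δ : LFmls α, (∀ u ∈ l, (u, φ) ∈ Δ) ∧
      ¬ Der bar P False True False False R ((w, Fml.dia x φ) ::ₘ (Δ + Γ)) := by
  induction l generalizing Γ with
  | nil => exact ⟨0, by simp, by simpa using h⟩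
  | cons u l ih =>
    obtain ⟨Δ, h1, h2⟩ := ih (fun v hv => hl v (List.mem_cons_of_mem _ hv))
      ((u, φ) ::ₘ Γ) (fun hd => h (Der.pr trivial (hl u List.mem_cons_self) hd))
    refine ⟨(u, φ) ::ₘ Δ, ?_, ?_⟩
    · intro v hv
      rcases List.mem_cons.1 hv with rfl | hv
      · exact Multiset.mem_cons_self _ _
      · exact Multiset.mem_cons_of_mem (h1 v hv)
    · rwa [Multiset.cons_add, ← Multiset.add_cons]

theorem one_step {R₀ R : RAtms α} (h₀ : R₀ ⊆ R) (a : ℕ × Fml α) (Γ L : LFmls α)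
    (h : ¬ Der bar P False True False False R (a ::ₘ (L + Γ))) :
    ∃ R' Γ', R ⊆ R' ∧ Γ ⊆ Γ' ∧ Good bar P R₀ R' Γ' a ∧
      ¬ Der bar P False True False False R' (L + Γ') := by
  obtain ⟨w, φ⟩ := a
  have hsub : ∀ b : ℕ × Fml α, Γ ⊆ b ::ₘ Γ := fun b _ h => Multiset.mem_cons_of_mem h
  cases φ with
  | pos p =>
    refine ⟨R, _, fun _ h => h, hsub (w, .pos p), Multiset.mem_cons_self _ _, ?_⟩
    rwa [Multiset.add_cons]
  | neg p =>
    refine ⟨R, _, fun _ h => h, hsub (w, .neg p), Multiset.mem_cons_self _ _, ?_⟩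
    rwa [Multiset.add_cons]
  | or φ ψ =>
    refine ⟨R, (w, φ) ::ₘ (w, ψ) ::ₘ Γ, fun _ h => h, ?_, ⟨by simp, by simp⟩, ?_⟩
    · intro b hb
      simp [hb]
    · rw [Multiset.add_cons, Multiset.add_cons]
      exact fun hd => h (Der.orr hd)
  | and φ ψ =>
    by_cases h1 : Der bar P False True False False R ((w, φ) ::ₘ (L + Γ))
    · refine ⟨R, _, fun _ h => h, hsub (w, ψ), Or.inr (Multiset.mem_cons_self _ _), ?_⟩
      rw [Multiset.add_cons]
      exact fun hd => h (Der.andr h1 hd)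
    · refine ⟨R, _, fun _ h => h, hsub (w, φ), Or.inl (Multiset.mem_cons_self _ _), ?_⟩
      rwa [Multiset.add_cons]
  | dia x φ =>
    obtain ⟨l, hl⟩ := exists_targets (bar := bar) (P := P) R x w
    obtain ⟨Δ, h1, h2⟩ := dia_step l (fun u hu => (hl u).1 hu) _ h
    refine ⟨R, (w, .dia x φ) ::ₘ (Δ + Γ), fun _ h => h, ?_, ⟨Multiset.mem_cons_self _ _, ?_⟩, ?_⟩
    · intro b hb
      exact Multiset.mem_cons_of_mem (Multiset.mem_add.2 (Or.inr hb))
    · intro u hu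
      exact Multiset.mem_cons_of_mem
        (Multiset.mem_add.2 (Or.inl (h1 u ((hl u).2 (hu.mono h₀)))))
    · rwa [Multiset.add_cons, add_left_comm]
  | box x φ =>
    obtain ⟨u, hu⟩ := exists_fresh R ((w, Fml.box x φ) ::ₘ (L + Γ))
    refine ⟨(x, w, u) ::ₘ R, _, fun _ h => Multiset.mem_cons_of_mem h, hsub (u, φ),
      ⟨u, Multiset.mem_cons_self _ _, Multiset.mem_cons_self _ _⟩, ?_⟩
    rw [Multiset.add_cons]
    exact fun hd => h (Der.boxr hu hd)

theorem round_aux {R₀ : RAtms α} (L : LFmls α) : ∀ (R : RAtms α) (Γ : LFmls α), R₀ ⊆ R →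
    ¬ Der bar P False True False False R (L + Γ) →
    ∃ R' Γ', R ⊆ R' ∧ Γ ⊆ Γ' ∧ (∀ a ∈ L, Good bar P R₀ R' Γ' a) ∧
      ¬ Der bar P False True False False R' Γ' := by
  induction L using Multiset.induction_on with
  | empty =>
    intro R Γ _ h
    exact ⟨R, Γ, fun _ h => h, fun _ h => h, by simp, by simpa using h⟩
  | cons a L ih =>
    intro R Γ h₀ h
    rw [Multiset.cons_add] at h
    obtain ⟨R1, Γ1, hR1, hΓ1, hg, h1⟩ := one_step h₀ a Γ L h
    obtain ⟨R2, Γ2, hR2, hΓ2, hg2, h2⟩ := ih R1 Γ1 (fun _ h => hR1 (h₀ h)) h1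
    refine ⟨R2, Γ2, fun _ h => hR2 (hR1 h), fun _ h => hΓ2 (hΓ1 h), ?_, h2⟩
    intro b hb
    rcases Multiset.mem_cons.1 hb with rfl | hb
    · exact hg.mono hR2 hΓ2
    · exact hg2 b hb

theorem round (R : RAtms α) (Γ : LFmls α) (h : ¬ Der bar P False True False False R Γ) :
    ∃ R' Γ', R ⊆ R' ∧ (∀ a ∈ Γ, Good bar P R R' Γ' a) ∧
      ¬ Der bar P False True False False R' Γ' := by
  obtain ⟨R', Γ', h1, _, h2, h3⟩ := round_aux (R₀ := R) Γ R 0 (fun _ h => h) (by simpa using h)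
  exact ⟨R', Γ', h1, h2, h3⟩

/-- Underivable sequents. -/
abbrev Und (bar : α → α) (P : Set (α × List α)) : Type :=
  {q : RAtms α × LFmls α // ¬ Der bar P False True False False q.1 q.2}

theorem exists_seq (R : RAtms α) (Γ : LFmls α) (h : ¬ Der bar P False True False False R Γ) :
    ∃ (r : ℕ → RAtms α) (g : ℕ → LFmls α), g 0 = Γ ∧
      (∀ n, ¬ Der bar P False True False False (r n) (g n)) ∧
      (∀ n, r n ⊆ r (n + 1)) ∧
      ∀ n, ∀ a ∈ g n, Good bar P (r n) (r (n + 1)) (g (n + 1)) a := by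
  have step : ∀ q : Und bar P, ∃ q' : Und bar P, q.1.1 ⊆ q'.1.1 ∧
      ∀ a ∈ q.1.2, Good bar P q.1.1 q'.1.1 q'.1.2 a := by
    rintro ⟨⟨R, Γ⟩, hq⟩
    obtain ⟨R', Γ', h1, h2, h3⟩ := round R Γ hq
    exact ⟨⟨⟨R', Γ'⟩, h3⟩, h1, h2⟩
  choose nx h1 h2 using step
  let q : ℕ → Und bar P := fun n => Nat.rec ⟨⟨R, Γ⟩, h⟩ (fun _ q => nx q) n
  exact ⟨fun n => (q n).1.1, fun n => (q n).1.2, rfl, fun n => (q n).2,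
    fun n => h1 (q n), fun n => h2 (q n)⟩

theorem completeness (hbar : Function.Involutive bar)
    (hc : ∀ x s, (x, s) ∈ P → (bar x, strConv bar s) ∈ P) (φ : Fml α) (w : ℕ)
    (hv : FmlValid bar P φ) : Der bar P False True False False 0 {(w, φ)} := by
  by_contra hnd
  obtain ⟨r, g, hg0, hund, hr, hgood⟩ := exists_seq _ _ hnd
  have hrm : ∀ {m n}, m ≤ n → r m ⊆ r n := by
    intro m n hmn
    induction hmn with
    | refl => exact fun _ h => h
    | step _ ih => exact fun _ h => hr _ (ih h)
  have hpers : ∀ (a : ℕ × Fml α), (∀ R R' Γ, Good bar P R R' Γ a → a ∈ Γ) →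
      ∀ {m n}, m ≤ n → a ∈ g m → a ∈ g n := by
    intro a ha m n hmn hm
    induction hmn with
    | refl => exact hm
    | step _ ih => exact ha _ _ _ (hgood _ _ ih)
  let M : KmModel α bar P :=
    { W := ℕ
      nonempty := ⟨0⟩
      rel := fun x w u => ∃ n, PropCond bar P (r n) x w u
      conv := by
        intro x w u
        constructor
        · rintro ⟨n, h⟩
          have := h.conv hbar hc
          rw [hbar x] at this
          exact ⟨n, this⟩
        · rintro ⟨n, h⟩
          exact ⟨n, h.conv hbar hc⟩
      prodCond := by
        intro x s hs w u h
        have key : ∀ (s : List α) (w u : ℕ),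
            RelChain (fun x w u => ∃ n, PropCond bar P (r n) x w u) s w u →
            ∃ n t, PPath bar (r n) w u t ∧ Relation.ReflTransGen (OneStep P) s t := by
          intro s
          induction s with
          | nil =>
            intro w u h
            have h : w = u := h
            subst h
            exact ⟨0, [], PPath.nil _, .refl⟩
          | cons y s ih =>
            rintro w u ⟨v, ⟨n, t, h1, h2⟩, h3⟩
            obtain ⟨m, t', h4, h5⟩ := ih v u h3
            exact ⟨max n m, t ++ t', (h1.mono (hrm (le_max_left _ _))).append
              (h4.mono (hrm (le_max_right _ _))), steps_append (s := [y]) h2 h5⟩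
        obtain ⟨n, t, h1, h2⟩ := key s w u h
        exact ⟨n, t, h1, Relation.ReflTransGen.head ⟨[], [], x, s, hs, by simp, by simp⟩ h2⟩
      val := fun p => {w | ∀ n, (w, Fml.pos p) ∉ g n} }
  have truth : ∀ (ψ : Fml α) (v n : ℕ), (v, ψ) ∈ g n → ¬ Sat M v ψ := by
    intro ψ
    induction ψ with
    | pos p =>
      intro v n h hs
      exact hs n h
    | neg p =>
      intro v n h hs
      apply hs
      intro m hm
      have h1 := hpers _ (fun _ _ _ h => h) (le_max_left n m) h
      have h2 := hpers _ (fun _ _ _ h => h) (le_max_right n m) hm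
      apply hund (max n m)
      obtain ⟨Γ, hΓ⟩ := Multiset.exists_cons_of_mem h2
      rw [hΓ] at h1 ⊢
      simp only [Multiset.mem_cons, Prod.mk.injEq, reduceCtorEq, and_false, false_or] at h1
      obtain ⟨Γ', rfl⟩ := Multiset.exists_cons_of_mem h1
      exact Der.id _ _ _ _
    | or φ ψ ih1 ih2 =>
      intro v n h hs
      have := hgood _ _ h
      rcases hs with hs | hs
      · exact ih1 _ _ this.1 hs
      · exact ih2 _ _ this.2 hs
    | and φ ψ ih1 ih2 =>
      intro v n h hs
      rcases hgood _ _ h with h | h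
      · exact ih1 _ _ h hs.1
      · exact ih2 _ _ h hs.2
    | dia x φ ih =>
      rintro v n h ⟨u, ⟨m, hm⟩, hs⟩
      have h1 := hpers (v, Fml.dia x φ) (fun _ _ _ h => h.1) (le_max_left n m) h
      exact ih u _ ((hgood _ _ h1).2 u (hm.mono (hrm (le_max_right n m)))) hs
    | box x φ ih =>
      intro v n h hs
      obtain ⟨u, h1, h2⟩ := hgood _ _ h
      exact ih u _ h2 (hs u ⟨n + 1, [x], PPath.cons (Or.inl h1) (PPath.nil _), .refl⟩)
  exact truth φ w 0 (by rw [hg0]; simp) (hv M w)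

end Aux

/-- Let `S` be a CFCST system over `Σ`.
(i) Every labelled sequent derivable in `Km(S)L` is `Km(S)`-valid.
(ii) For every `Km(S)`-valid formula `φ`, the labelled sequent `∅ ⊢ w:φ` is
derivable in `Km(S)L`. -/
theorem kmL_sound_complete {α : Type} (bar : α → α)
    (hbar : Function.Involutive bar) (S : CFCST α bar) :
    (∀ (R : RAtms α) (Γ : LFmls α), KmL bar S R Γ → SeqValid bar S.rules R Γ) ∧
    (∀ (φ : Fml α) (w : ℕ), FmlValid bar S.rules φ →
      KmL bar S (0 : RAtms α) ({(w, φ)} : LFmls α)) := by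
  exact ⟨fun R Γ h => soundness h,
    fun φ w h => completeness hbar (fun x s => (S.closed x s).1) φ w h⟩

end GrammarLogic
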